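/- Let d : ℕ → ℕ with d(m) ≥ 1 for all m, and for each m let B(m) and C(m) be d(m)×d(m) real matrices; write b(m) = β₁(B(m)) and c(m) = β₁(C(m)). Assume: (i) β₁((B(m) − b(m)·I)(C(m) − c(m)·I)(B(m) − b(m)·I)(C(m) − c(m)·I)) → 0; (ii) β₁(B(m)²·C(m)) − β₂(B(m))·c(m) → 0; (iii) β₁(B(m)·C(m)²) − b(m)·β₂(C(m)) → 0; (iv) β₁(B(m)·C(m)) − b(m)·c(m) → 0; (v) the sequences (b(m)), (c(m)), (β₂(B(m))), (β₂(C(m))) are all bounded. Then β₁(B(m)·C(m)·B(m)·C(m)) − (β₂(B(m))·c(m)² + b(m)²·β₂(C(m)) − b(m)²·c(m)²) → 0 as m → ∞. -/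

import Mathlib

open Matrix Filter

/-- `β₁(A) = (1/m)·tr(A)` for an `m × m` real matrix. -/
noncomputable def beta1 {m : ℕ} (A : Matrix (Fin m) (Fin m) ℝ) : ℝ :=
  A.trace / m

/-- `β₂(A) = (1/m)·tr(A²)` for an `m × m` real matrix. -/
noncomputable def beta2 {m : ℕ} (A : Matrix (Fin m) (Fin m) ℝ) : ℝ :=
  (A ^ 2).trace / m

/-! For a unital trace `τ`, put `x° = x - τ(x)` and `y° = y - τ(y)`. Expanding `τ(x°y°x°y°)` and
using cyclicity shows that `τ(xyxy)` differs from its asymptotic value by `τ(x°y°x°y°)` plus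
multiples of the defects `τ(x²y) - τ(x²)τ(y)`, `τ(xy²) - τ(x)τ(y²)` and `τ(xy) - τ(x)τ(y)`, whose
coefficients, being polynomials in `τ(x)` and `τ(y)`, stay bounded. -/

/-- A unital tracial functional, the expectation of a noncommutative probability space; no
positivity is required, so the algebra carries neither a star nor an order. -/
structure IsUnitalTrace {R A : Type*} [CommSemiring R] [Semiring A] [Algebra R A]
    (τ : A →ₗ[R] R) : Prop where
  map_one : τ 1 = 1
  map_mul_comm : ∀ x y, τ (x * y) = τ (y * x)

theorem IsUnitalTrace.map_alternating_sub_eq {R A : Type*} [CommRing R] [Ring A] [Algebra R A]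
    {τ : A →ₗ[R] R} (hτ : IsUnitalTrace τ) (x y : A) :
    τ (x * y * x * y) - (τ (x ^ 2) * τ y ^ 2 + τ x ^ 2 * τ (y ^ 2) - τ x ^ 2 * τ y ^ 2) =
      τ ((x - τ x • 1) * (y - τ y • 1) * (x - τ x • 1) * (y - τ y • 1))
        + 2 * (τ y * (τ (x ^ 2 * y) - τ (x ^ 2) * τ y))
        + 2 * (τ x * (τ (x * y ^ 2) - τ x * τ (y ^ 2)))
        - 4 * (τ x * (τ y * (τ (x * y) - τ x * τ y))) := by
  have map_yx : τ (y * x) = τ (x * y) := hτ.map_mul_comm y x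
  have map_xyx : τ (x * y * x) = τ (x * x * y) := by rw [hτ.map_mul_comm, mul_assoc]
  have map_yxy : τ (y * x * y) = τ (x * y * y) := by rw [mul_assoc, hτ.map_mul_comm]
  simp only [pow_two x, pow_two y, mul_sub, sub_mul, smul_sub, smul_mul_assoc, mul_smul_comm,
    one_mul, mul_one, ← mul_assoc, map_sub, map_smul, smul_eq_mul, hτ.map_one, map_yx, map_xyx,
    map_yxy]
  ring

/-- `beta1` as a linear functional, through which the matrix algebra becomes an instance of
`IsUnitalTrace`. -/
noncomputable def beta1LinearMap (n : ℕ) : Matrix (Fin n) (Fin n) ℝ →ₗ[ℝ] ℝ where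
  toFun := beta1
  map_add' A B := by simp only [beta1, trace_add, add_div]
  map_smul' r A := by simp only [beta1, trace_smul, smul_eq_mul, mul_div_assoc, RingHom.id_apply]

theorem isUnitalTrace_beta1LinearMap {n : ℕ} (hn : n ≠ 0) : IsUnitalTrace (beta1LinearMap n) where
  map_one := by
    change (1 : Matrix (Fin n) (Fin n) ℝ).trace / n = 1
    rw [trace_one, Fintype.card_fin, div_self (Nat.cast_ne_zero.mpr hn)]
  map_mul_comm A B := congrArg (· / (n : ℝ)) (trace_mul_comm A B)

theorem beta1_alternating_tendsto_general {ι R : Type*} {A : ι → Type*} [SeminormedCommRing R]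
    [∀ i, Ring (A i)] [∀ i, Algebra R (A i)] {l : Filter ι} {τ : ∀ i, A i →ₗ[R] R}
    (hτ : ∀ i, IsUnitalTrace (τ i)) (x y : ∀ i, A i)
    (hfree : Tendsto (fun i => τ i ((x i - τ i (x i) • 1) * (y i - τ i (y i) • 1) *
      (x i - τ i (x i) • 1) * (y i - τ i (y i) • 1))) l (nhds 0))
    (hx2y : Tendsto (fun i => τ i (x i ^ 2 * y i) - τ i (x i ^ 2) * τ i (y i)) l (nhds 0))
    (hxy2 : Tendsto (fun i => τ i (x i * y i ^ 2) - τ i (x i) * τ i (y i ^ 2)) l (nhds 0))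
    (hxy : Tendsto (fun i => τ i (x i * y i) - τ i (x i) * τ i (y i)) l (nhds 0))
    (hx : IsBoundedUnder (· ≤ ·) l fun i => ‖τ i (x i)‖)
    (hy : IsBoundedUnder (· ≤ ·) l fun i => ‖τ i (y i)‖) :
    Tendsto (fun i => τ i (x i * y i * x i * y i) - (τ i (x i ^ 2) * τ i (y i) ^ 2
      + τ i (x i) ^ 2 * τ i (y i ^ 2) - τ i (x i) ^ 2 * τ i (y i) ^ 2)) l (nhds 0) := by
  have hx2y_term := (isBoundedUnder_le_mul_tendsto_zero hy hx2y).const_mul 2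
  have hxy2_term := (isBoundedUnder_le_mul_tendsto_zero hx hxy2).const_mul 2
  have hxy_term :=
    (isBoundedUnder_le_mul_tendsto_zero hx (isBoundedUnder_le_mul_tendsto_zero hy hxy)).const_mul 4
  have hsum := ((hfree.add hx2y_term).add hxy2_term).sub hxy_term
  simpa only [(hτ _).map_alternating_sub_eq, mul_zero, add_zero, sub_zero] using hsum

/-- under the asymptotic freeness condition for the alternating
product of centered matrices, together with the second-order conditions and
boundedness, `β₁(BCBC) − (β₂(B)c² + b²β₂(C) − b²c²) → 0`. -/
theorem beta1_alternating_tendsto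
    (d : ℕ → ℕ) (hd : ∀ m, 1 ≤ d m)
    (B C : ∀ m, Matrix (Fin (d m)) (Fin (d m)) ℝ)
    (b c : ℕ → ℝ)
    (hb : ∀ m, b m = beta1 (B m)) (hc : ∀ m, c m = beta1 (C m))
    (hfree : Tendsto (fun m =>
        beta1 ((B m - b m • (1 : Matrix (Fin (d m)) (Fin (d m)) ℝ)) *
               (C m - c m • (1 : Matrix (Fin (d m)) (Fin (d m)) ℝ)) *
               (B m - b m • (1 : Matrix (Fin (d m)) (Fin (d m)) ℝ)) *
               (C m - c m • (1 : Matrix (Fin (d m)) (Fin (d m)) ℝ))))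
      atTop (nhds 0))
    (hB2C : Tendsto (fun m => beta1 (B m ^ 2 * C m) - beta2 (B m) * c m)
      atTop (nhds 0))
    (hBC2 : Tendsto (fun m => beta1 (B m * C m ^ 2) - b m * beta2 (C m))
      atTop (nhds 0))
    (hBC : Tendsto (fun m => beta1 (B m * C m) - b m * c m) atTop (nhds 0))
    (hbddb : ∃ M : ℝ, ∀ m, |b m| ≤ M)
    (hbddc : ∃ M : ℝ, ∀ m, |c m| ≤ M)
    (hbddB2 : ∃ M : ℝ, ∀ m, |beta2 (B m)| ≤ M)
    (hbddC2 : ∃ M : ℝ, ∀ m, |beta2 (C m)| ≤ M) :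
    Tendsto (fun m => beta1 (B m * C m * B m * C m)
        - (beta2 (B m) * c m ^ 2 + b m ^ 2 * beta2 (C m) - b m ^ 2 * c m ^ 2))
      atTop (nhds 0) := by
  obtain rfl := funext hb
  obtain rfl := funext hc
  exact beta1_alternating_tendsto_general (τ := fun m => beta1LinearMap (d m))
    (fun m => isUnitalTrace_beta1LinearMap (Nat.one_le_iff_ne_zero.mp (hd m))) B C
    hfree hB2C hBC2 hBC (isBoundedUnder_of hbddb) (isBoundedUnder_of hbddc)
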